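/- Disintegrated kl and McAllester-type bounds with the positive-part log ratio: For any probability measure D on Z, any loss ℓ : H × Z → [0,1], any prior density P on H, any posterior Markov kernel S ↦ Q_S with strictly positive densities, and any δ ∈ (0,1], each of the following holds with probability at least 1−δ over S ∼ D^m and h ∼ Q_S: (i) kl(R_S^ℓ(h) ‖ R_D^ℓ(h)) ≤ (1/m)·[ ln₊(Q_S(h)/P(h)) + ln(2√m/δ) ]; (ii) |R_S^ℓ(h) − R_D^ℓ(h)| ≤ √( (1/(2m))·[ ln₊(Q_S(h)/P(h)) + ln(2√m/δ) ] ). -/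

import Mathlib

open MeasureTheory ProbabilityTheory

/-- The true risk `R_D^ℓ(h) = E_{z∼D} ℓ(h,z)`. -/
noncomputable def trueRisk {H Z : Type*} [MeasurableSpace Z]
    (D : Measure Z) (ℓ : H → Z → ℝ) (h : H) : ℝ :=
  ∫ z, ℓ h z ∂D

/-- The empirical risk `R_S^ℓ(h) = (1/m) Σ_{i=1}^m ℓ(h,z_i)`. -/
noncomputable def empRisk {H Z : Type*} {m : ℕ}
    (ℓ : H → Z → ℝ) (h : H) (S : Fin m → Z) : ℝ :=
  (∑ i, ℓ h (S i)) / m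

/-- The binary KL divergence `kl(q‖p) = q ln(q/p) + (1−q) ln((1−q)/(1−p))`. -/
noncomputable def binKL (q p : ℝ) : ℝ :=
  q * Real.log (q / p) + (1 - q) * Real.log ((1 - q) / (1 - p))

/-!
For fixed `h`, Jensen's inequality over independent Bernoulli trials with success probabilities
`ℓ(h, zᵢ)` reduces the exponential moment of a convex function of the empirical risk to the binomial
case. There `exp(m kl(k/m‖p))` is the ratio of the maximal to the actual likelihood of `k`, so the
moment of `m kl(R_S‖R_D)` is at most the Shtarkov sum of the binomial model. Abel's identity
rewrites that sum as `∑ a_k` with `a_k = m(m-1)⋯(m-k+1) / m^k ∈ [0, 1]` and `∑ k a_k = m`, which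
forces `∑ a_k ≤ 2√m`. By Pinsker's inequality the same bound holds for `2m(R_S - R_D)²`.

The prior does not depend on `S`, so the moment bound survives averaging `h` over it. Multiplying by
the posterior-to-prior density ratio passes to the posterior, and Markov's inequality concludes. The
argument gives both bounds with `ln(Q_S/P)` itself, not only its positive part.
-/

section ShtarkovSum

open Finset

theorem sum_range_choose_mul_neg_one_pow_mul_pow {R : Type*} [CommRing R] (n : ℕ) :
    ∑ k ∈ range (n + 1), (n.choose k : R) * (-1) ^ (n - k) * (k : R) ^ n = n.factorial := by
  have h := congrFun (fwdDiff_iter_eq_factorial (R := R) (n := n)) 0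
  rw [fwdDiff_iter_eq_sum_shift, Pi.natCast_apply] at h
  rw [← h]
  refine sum_congr rfl fun k _ ↦ ?_
  simp only [nsmul_one, zero_add, zsmul_eq_mul, Int.cast_mul, Int.cast_pow, Int.cast_neg,
    Int.cast_one, Int.cast_natCast]
  ring

theorem choose_mul_choose_sub_comm (n j k : ℕ) :
    n.choose k * (n - k).choose j = n.choose j * (n - j).choose k := by
  have hk := Nat.choose_mul (n := n) (Nat.le_add_right k j)
  have hj := Nat.choose_mul (n := n) (Nat.le_add_left j k)
  rw [Nat.add_sub_cancel_left] at hk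
  rw [Nat.add_sub_cancel_right] at hj
  rw [← hk, ← hj, Nat.choose_symm_add]

-- Expand `(y - k) ^ (n - k)`; the coefficient of `y ^ j` is an `(n - j)`-th forward difference.
theorem sum_range_choose_mul_pow_self_mul_sub_pow {R : Type*} [CommRing R] (n : ℕ) (y : R) :
    ∑ k ∈ range (n + 1), (n.choose k : R) * (k : R) ^ k * (y - k) ^ (n - k) =
      ∑ j ∈ range (n + 1), (n.descFactorial j : R) * y ^ (n - j) := by
  calc ∑ k ∈ range (n + 1), (n.choose k : R) * (k : R) ^ k * (y - k) ^ (n - k)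
      = ∑ k ∈ range (n + 1), ∑ j ∈ range (n - k + 1), (n.choose j : R) * y ^ j *
          (((n - j).choose k : R) * (-1) ^ (n - j - k) * (k : R) ^ (n - j)) := by
        refine sum_congr rfl fun k hk ↦ ?_
        rw [sub_eq_add_neg, add_pow, mul_sum]
        refine sum_congr rfl fun j hj ↦ ?_
        have hjk : n - j = k + (n - k - j) := by grind
        have hchoose : (n.choose k * (n - k).choose j : R) = n.choose j * (n - j).choose k :=
          by exact_mod_cast congrArg (Nat.cast (R := R)) (choose_mul_choose_sub_comm n j k)
        rw [neg_pow, show n - j - k = n - k - j by lia, show (k : R) ^ (n - j) =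
          (k : R) ^ k * (k : R) ^ (n - k - j) by rw [← pow_add, ← hjk]]
        linear_combination
          (k : R) ^ k * y ^ j * (-1) ^ (n - k - j) * (k : R) ^ (n - k - j) * hchoose
    _ = ∑ j ∈ range (n + 1), ∑ k ∈ range (n - j + 1), (n.choose j : R) * y ^ j *
          (((n - j).choose k : R) * (-1) ^ (n - j - k) * (k : R) ^ (n - j)) :=
        sum_comm' fun k j ↦ by simp only [mem_range]; lia
    _ = ∑ j ∈ range (n + 1), (n.descFactorial (n - j) : R) * y ^ j := by
        refine sum_congr rfl fun j hj ↦ ?_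
        have hjn : j ≤ n := mem_range_succ_iff.1 hj
        rw [← mul_sum, sum_range_choose_mul_neg_one_pow_mul_pow,
          Nat.descFactorial_eq_factorial_mul_choose, Nat.choose_symm hjn]
        push_cast
        ring
    _ = ∑ j ∈ range (n + 1), (n.descFactorial j : R) * y ^ (n - j) := by
        rw [← sum_flip]
        refine sum_congr rfl fun j hj ↦ ?_
        rw [Nat.sub_sub_self (mem_range_succ_iff.1 hj)]

theorem sq_sum_range_le {a : ℕ → ℝ} (ha : ∀ k, a k ∈ Set.Icc (0 : ℝ) 1) (n : ℕ) :
    (∑ k ∈ range n, a k) ^ 2 ≤ 2 * ∑ k ∈ range n, k * a k + ∑ k ∈ range n, a k := by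
  induction n with
  | zero => simp
  | succ n ih =>
    have hsum : ∑ k ∈ range n, a k ≤ n := by
      simpa using sum_le_card_nsmul (range n) a 1 fun k _ ↦ (ha k).2
    simp only [sum_range_succ]
    nlinarith [mul_le_mul_of_nonneg_right hsum (ha n).1,
      mul_le_mul_of_nonneg_right (ha n).2 (ha n).1]

theorem descFactorial_div_pow_mem_Icc (m k : ℕ) :
    (m.descFactorial k : ℝ) / (m : ℝ) ^ k ∈ Set.Icc (0 : ℝ) 1 :=
  ⟨by positivity, div_le_one_of_le₀ (mod_cast Nat.descFactorial_le_pow m k) (by positivity)⟩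

theorem sum_range_mul_descFactorial_div_pow {m : ℕ} (hm : 0 < m) :
    ∑ k ∈ range (m + 1), (k : ℝ) * ((m.descFactorial k : ℝ) / (m : ℝ) ^ k) = m := by
  have htelescope : ∀ k ∈ range (m + 1), (k : ℝ) * ((m.descFactorial k : ℝ) / (m : ℝ) ^ k) =
      m * ((m.descFactorial k : ℝ) / (m : ℝ) ^ k) -
        m * ((m.descFactorial (k + 1) : ℝ) / (m : ℝ) ^ (k + 1)) := by
    intro k hk
    rw [Nat.descFactorial_succ, Nat.cast_mul, Nat.cast_sub (mem_range_succ_iff.1 hk)]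
    field_simp
    ring
  rw [sum_congr rfl htelescope,
    sum_range_sub' fun k ↦ (m : ℝ) * ((m.descFactorial k : ℝ) / (m : ℝ) ^ k)]
  simp

theorem sum_range_descFactorial_div_pow_le {m : ℕ} (hm : 0 < m) :
    ∑ k ∈ range (m + 1), (m.descFactorial k : ℝ) / (m : ℝ) ^ k ≤ 2 * √m := by
  have hsq := sq_sum_range_le (descFactorial_div_pow_mem_Icc m) (m + 1)
  rw [sum_range_mul_descFactorial_div_pow hm] at hsq
  have hsqrt : √(m : ℝ) ^ 2 = m := Real.sq_sqrt m.cast_nonneg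
  have hone : 1 ≤ √(m : ℝ) := Real.one_le_sqrt.2 (mod_cast hm)
  nlinarith

/-- The Shtarkov sum of the binomial model with `m` trials: the total mass of the likelihoods
`C(m, k) p ^ k (1 - p) ^ (m - k)`, each maximised over `p` (at `p = k / m`). It bounds the
exponential moment of `m · kl(R_S ‖ R_D)`. -/
noncomputable def shtarkovSum (m : ℕ) : ℝ :=
  ∑ k ∈ range (m + 1), (m.choose k : ℝ) * ((k / m : ℝ) ^ k * (1 - k / m : ℝ) ^ (m - k))

theorem shtarkovSum_eq_sum_descFactorial_div_pow {m : ℕ} (hm : 0 < m) :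
    shtarkovSum m = ∑ k ∈ range (m + 1), (m.descFactorial k : ℝ) / (m : ℝ) ^ k := by
  have hm0 : (m : ℝ) ≠ 0 := mod_cast hm.ne'
  have hpow : ∀ k ∈ range (m + 1), (m : ℝ) ^ m = (m : ℝ) ^ k * (m : ℝ) ^ (m - k) := fun k hk ↦ by
    rw [← pow_add, Nat.add_sub_cancel' (mem_range_succ_iff.1 hk)]
  calc shtarkovSum m
      = (∑ k ∈ range (m + 1), (m.choose k : ℝ) * (k : ℝ) ^ k * ((m : ℝ) - k) ^ (m - k)) /
          (m : ℝ) ^ m := by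
        rw [shtarkovSum, sum_div]
        refine sum_congr rfl fun k hk ↦ ?_
        rw [one_sub_div hm0, div_pow, div_pow, hpow k hk]
        field_simp
    _ = (∑ k ∈ range (m + 1), (m.descFactorial k : ℝ) * (m : ℝ) ^ (m - k)) / (m : ℝ) ^ m := by
        rw [sum_range_choose_mul_pow_self_mul_sub_pow]
    _ = ∑ k ∈ range (m + 1), (m.descFactorial k : ℝ) / (m : ℝ) ^ k := by
        rw [sum_div]
        refine sum_congr rfl fun k hk ↦ ?_
        rw [hpow k hk]
        field_simp

theorem shtarkovSum_le_two_mul_sqrt {m : ℕ} (hm : 0 < m) : shtarkovSum m ≤ 2 * √m :=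
  (shtarkovSum_eq_sum_descFactorial_div_pow hm).trans_le (sum_range_descFactorial_div_pow_le hm)

end ShtarkovSum

section BernoulliWeight

open Finset

theorem card_div_card_mem_Icc {ι : Type*} [Fintype ι] (t : Finset ι) :
    (#t / Fintype.card ι : ℝ) ∈ Set.Icc (0 : ℝ) 1 :=
  ⟨by positivity, div_le_one_of_le₀ (mod_cast card_le_univ t) (by positivity)⟩

variable {ι : Type*} [DecidableEq ι]

/-- The probability that independent Bernoulli trials indexed by `s`, the `i`-th succeeding with
probability `x i`, succeed exactly on `t ⊆ s`. -/
def bernoulliWeight (x : ι → ℝ) (s t : Finset ι) : ℝ :=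
  (∏ i ∈ t, x i) * ∏ i ∈ s \ t, (1 - x i)

theorem bernoulliWeight_nonneg {x : ι → ℝ} (hx : ∀ i, x i ∈ Set.Icc (0 : ℝ) 1) (s t : Finset ι) :
    0 ≤ bernoulliWeight x s t :=
  mul_nonneg (prod_nonneg fun i _ ↦ (hx i).1) (prod_nonneg fun i _ ↦ sub_nonneg.2 (hx i).2)

theorem bernoulliWeight_const (p : ℝ) {s t : Finset ι} (hts : t ⊆ s) :
    bernoulliWeight (fun _ ↦ p) s t = p ^ #t * (1 - p) ^ (#s - #t) := by
  rw [bernoulliWeight, prod_const, prod_const, card_sdiff_of_subset hts]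

theorem sum_powerset_bernoulliWeight (x : ι → ℝ) (s : Finset ι) :
    ∑ t ∈ s.powerset, bernoulliWeight x s t = 1 := by
  simp only [bernoulliWeight, ← prod_add, add_sub_cancel, prod_const_one]

theorem bernoulliWeight_insert_left (x : ι → ℝ) {s t : Finset ι} {a : ι} (ha : a ∉ s)
    (hts : t ⊆ s) : bernoulliWeight x (insert a s) t = (1 - x a) * bernoulliWeight x s t := by
  rw [bernoulliWeight, bernoulliWeight, insert_sdiff_of_notMem _ (fun h ↦ ha (hts h)),
    prod_insert (fun h ↦ ha (mem_sdiff.1 h).1)]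
  ring

theorem bernoulliWeight_insert_insert (x : ι → ℝ) {s t : Finset ι} {a : ι} (ha : a ∉ s)
    (hts : t ⊆ s) :
    bernoulliWeight x (insert a s) (insert a t) = x a * bernoulliWeight x s t := by
  rw [bernoulliWeight, bernoulliWeight, insert_sdiff_insert, sdiff_insert_of_notMem ha,
    prod_insert (fun h ↦ ha (hts h)), mul_assoc]

theorem sum_powerset_bernoulliWeight_mul_card (x : ι → ℝ) (s : Finset ι) :
    ∑ t ∈ s.powerset, bernoulliWeight x s t * #t = ∑ i ∈ s, x i := by
  induction s using Finset.induction_on with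
  | empty => simp
  | insert a s ha ih =>
    have hstep : ∀ t ∈ s.powerset, bernoulliWeight x (insert a s) t * #t +
        bernoulliWeight x (insert a s) (insert a t) * #(insert a t) =
          bernoulliWeight x s t * #t + x a * bernoulliWeight x s t := by
      intro t ht
      have hts := mem_powerset.1 ht
      rw [bernoulliWeight_insert_left x ha hts, bernoulliWeight_insert_insert x ha hts,
        card_insert_of_notMem fun h ↦ ha (hts h)]
      push_cast
      ring
    rw [sum_powerset_insert ha, ← sum_add_distrib, sum_congr rfl hstep, sum_add_distrib, ih,
      ← mul_sum, sum_powerset_bernoulliWeight, sum_insert ha]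
    ring

theorem convexOn_mean_le_sum_bernoulliWeight [Fintype ι] {φ : ℝ → ℝ}
    (hφ : ConvexOn ℝ (Set.Icc 0 1) φ) {x : ι → ℝ} (hx : ∀ i, x i ∈ Set.Icc (0 : ℝ) 1) :
    φ ((∑ i, x i) / Fintype.card ι) ≤
      ∑ t, bernoulliWeight x univ t * φ (#t / Fintype.card ι) := by
  have hmean : (∑ i, x i) / Fintype.card ι =
      ∑ t, bernoulliWeight x univ t * (#t / Fintype.card ι : ℝ) := by
    rw [← sum_powerset_bernoulliWeight_mul_card, powerset_univ, sum_div]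
    exact sum_congr rfl fun t _ ↦ mul_div_assoc _ _ _
  rw [hmean]
  refine hφ.map_sum_le (fun t _ ↦ bernoulliWeight_nonneg hx univ t) ?_
    fun t _ ↦ card_div_card_mem_Icc t
  rw [← powerset_univ, sum_powerset_bernoulliWeight]

theorem bernoulliWeight_univ_eq_prod_ite [Fintype ι] (x : ι → ℝ) (t : Finset ι) :
    bernoulliWeight x univ t = ∏ i, if i ∈ t then x i else 1 - x i := by
  simp only [bernoulliWeight, prod_ite, filter_univ_mem, filter_notMem_eq_sdiff]

section Integral

variable [Fintype ι] {Z : ι → Type*} [∀ i, MeasurableSpace (Z i)] {μ : ∀ i, Measure (Z i)}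
  [∀ i, IsProbabilityMeasure (μ i)] {f : ∀ i, Z i → ℝ}

theorem integrable_bernoulliWeight (hf : ∀ i, Integrable (f i) (μ i)) (t : Finset ι) :
    Integrable (fun z : ∀ i, Z i ↦ bernoulliWeight (fun i ↦ f i (z i)) univ t)
      (Measure.pi μ) := by
  simp only [bernoulliWeight_univ_eq_prod_ite]
  refine Integrable.fintype_prod_dep (f := fun i z ↦ if i ∈ t then f i z else 1 - f i z) fun i ↦ ?_
  split_ifs
  exacts [hf i, (integrable_const 1).sub (hf i)]

theorem integral_bernoulliWeight (hf : ∀ i, Integrable (f i) (μ i)) (t : Finset ι) :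
    ∫ z : ∀ i, Z i, bernoulliWeight (fun i ↦ f i (z i)) univ t ∂Measure.pi μ =
      bernoulliWeight (fun i ↦ ∫ z, f i z ∂μ i) univ t := by
  simp only [bernoulliWeight_univ_eq_prod_ite]
  rw [integral_fintype_prod_eq_prod fun i z ↦ if i ∈ t then f i z else 1 - f i z]
  refine prod_congr rfl fun i _ ↦ ?_
  split_ifs
  · rfl
  · rw [integral_sub (integrable_const 1) (hf i), integral_const, probReal_univ, one_smul]

end Integral

end BernoulliWeight

section IIDMean

open Finset

variable {ι Z : Type*} [Fintype ι] [MeasurableSpace Z] {D : Measure Z} [IsProbabilityMeasure D]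
  {f : Z → ℝ}

-- Among `[0, 1]`-valued i.i.d. variables of given mean, Bernoulli ones maximise `E φ(mean)`.
theorem lintegral_convexOn_mean_le (hf : Integrable f D) (hf01 : ∀ z, f z ∈ Set.Icc (0 : ℝ) 1)
    {φ : ℝ → ℝ} (hφ : ConvexOn ℝ (Set.Icc 0 1) φ) (hφ0 : ∀ q ∈ Set.Icc (0 : ℝ) 1, 0 ≤ φ q) :
    ∫⁻ S : ι → Z, ENNReal.ofReal (φ ((∑ i, f (S i)) / Fintype.card ι))
        ∂Measure.pi (fun _ ↦ D) ≤
      ENNReal.ofReal (∑ k ∈ range (Fintype.card ι + 1), ((Fintype.card ι).choose k : ℝ) *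
        ((∫ z, f z ∂D) ^ k * (1 - ∫ z, f z ∂D) ^ (Fintype.card ι - k) *
          φ (k / Fintype.card ι))) := by
  classical
  set n := Fintype.card ι
  set p := ∫ z, f z ∂D
  have hjensen : ∀ S : ι → Z, φ ((∑ i, f (S i)) / n) ≤
      ∑ t, bernoulliWeight (fun i ↦ f (S i)) univ t * φ (#t / n) := fun S ↦
    convexOn_mean_le_sum_bernoulliWeight hφ fun i ↦ hf01 (S i)
  have hnonneg : ∀ S : ι → Z,
      0 ≤ ∑ t, bernoulliWeight (fun i ↦ f (S i)) univ t * φ (#t / n) := fun S ↦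
    sum_nonneg fun t _ ↦ mul_nonneg (bernoulliWeight_nonneg (fun i ↦ hf01 (S i)) univ t)
      (hφ0 _ (card_div_card_mem_Icc t))
  have hint : ∀ t : Finset ι, Integrable (fun S : ι → Z ↦
      bernoulliWeight (fun i ↦ f (S i)) univ t * φ (#t / n)) (Measure.pi fun _ ↦ D) := fun t ↦
    (integrable_bernoulliWeight (fun _ ↦ hf) t).mul_const _
  calc ∫⁻ S : ι → Z, ENNReal.ofReal (φ ((∑ i, f (S i)) / n)) ∂Measure.pi (fun _ ↦ D)
      ≤ ∫⁻ S : ι → Z, ENNReal.ofReal (∑ t, bernoulliWeight (fun i ↦ f (S i)) univ t * φ (#t / n))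
          ∂Measure.pi (fun _ ↦ D) := lintegral_mono fun S ↦ ENNReal.ofReal_le_ofReal (hjensen S)
    _ = ENNReal.ofReal (∑ t : Finset ι, p ^ #t * (1 - p) ^ (n - #t) * φ (#t / n)) := by
        rw [← ofReal_integral_eq_lintegral_ofReal (integrable_finsetSum _ fun t _ ↦ hint t)
          (.of_forall hnonneg), integral_finsetSum _ fun t _ ↦ hint t]
        congr! 2 with t
        rw [integral_mul_const, integral_bernoulliWeight fun _ ↦ hf,
          bernoulliWeight_const p (subset_univ t), card_univ]
    _ = _ := by
        rw [← powerset_univ,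
          sum_powerset_apply_card fun k ↦ p ^ k * (1 - p) ^ (n - k) * φ (k / n)]
        simp only [nsmul_eq_mul, card_univ, n]

end IIDMean

section BinaryKL

open Set

theorem convexOn_mul_log_div (p : ℝ) :
    ConvexOn ℝ (Ici 0) fun q : ℝ ↦ q * Real.log (q / p) := by
  rcases eq_or_ne p 0 with rfl | hp
  · simpa using convexOn_const (0 : ℝ) (convex_Ici (0 : ℝ))
  · have hlinear : ConvexOn ℝ (Ici 0) fun q : ℝ ↦ q * -Real.log p :=
      ((LinearMap.id (R := ℝ) (M := ℝ)).smulRight (-Real.log p)).convexOn (convex_Ici 0)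
    refine (Real.convexOn_mul_log.add hlinear).congr fun q _ ↦ ?_
    rcases eq_or_ne q 0 with rfl | hq
    · simp
    · simp only [Pi.add_apply, Real.log_div hq hp]
      ring

theorem convexOn_binKL (p : ℝ) : ConvexOn ℝ (Icc 0 1) fun q ↦ binKL q p := by
  have hleft := (convexOn_mul_log_div p).subset Icc_subset_Ici_self (convex_Icc 0 1)
  have hright : ConvexOn ℝ (Icc 0 1) fun q : ℝ ↦ (1 - q) * Real.log ((1 - q) / (1 - p)) :=
    ((convexOn_mul_log_div (1 - p)).comp_affineMap
      (AffineMap.const ℝ ℝ (1 : ℝ) - AffineMap.id ℝ ℝ)).subset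
      (fun q hq ↦ sub_nonneg.2 hq.2) (convex_Icc 0 1)
  exact hleft.add hright

theorem binKL_self (p : ℝ) : binKL p p = 0 := by
  have hlog : ∀ x : ℝ, Real.log (x / x) = 0 := fun x ↦ by
    rcases eq_or_ne x 0 with rfl | hx <;> simp [*]
  simp [binKL, hlog]

theorem binKL_eq_neg_binEntropy_sub {p : ℝ} (hp : p ∈ Ioo (0 : ℝ) 1) (q : ℝ) :
    binKL q p = -Real.binEntropy q - q * Real.log p - (1 - q) * Real.log (1 - p) := by
  have hmul_log_div : ∀ x y : ℝ, y ≠ 0 → x * Real.log (x / y) = x * Real.log x - x * Real.log y :=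
    fun x y hy ↦ by
      rcases eq_or_ne x 0 with rfl | hx
      · simp
      · rw [Real.log_div hx hy, mul_sub]
  rw [binKL, hmul_log_div q p hp.1.ne', hmul_log_div _ _ (sub_pos.2 hp.2).ne', Real.binEntropy,
    Real.log_inv, Real.log_inv]
  ring

theorem convexOn_neg_binEntropy_sub_two_mul_sq :
    ConvexOn ℝ (Icc 0 1) fun q ↦ -Real.binEntropy q - 2 * q ^ 2 := by
  refine convexOn_of_hasDerivWithinAt2_nonneg
    (f' := fun q ↦ -(Real.log (1 - q) - Real.log q) - 4 * q)
    (f'' := fun q ↦ -(-1 / (1 - q) - q⁻¹) - 4)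
    (convex_Icc 0 1) (by fun_prop) ?_ ?_ ?_ <;>
    rw [interior_Icc] <;> intro q hq <;> have hq1 : 0 < 1 - q := sub_pos.2 hq.2
  · refine HasDerivAt.hasDerivWithinAt ?_
    convert! (Real.hasDerivAt_binEntropy hq.1.ne' hq.2.ne).neg.sub
      ((hasDerivAt_pow 2 q).const_mul 2) using 1
    norm_num
    ring
  · refine HasDerivAt.hasDerivWithinAt ?_
    convert! ((((hasDerivAt_id q).const_sub 1).log hq1.ne').sub
      (Real.hasDerivAt_log hq.1.ne')).neg.sub ((hasDerivAt_id q).const_mul 4) using 1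
    simp
  · have hq0 : 0 < q := hq.1
    have hsq : -(-1 / (1 - q) - q⁻¹) - 4 = (1 - 2 * q) ^ 2 / (q * (1 - q)) := by
      field_simp
      ring
    rw [hsq]
    positivity

-- `q ↦ kl(q‖p) - 2 (q - p) ^ 2` is convex and critical at `p`. For `p ∈ {0, 1}` and `q ≠ p` the
-- divergence is infinite, but `binKL` takes a finite junk value.
theorem two_mul_sub_sq_le_binKL {p q : ℝ} (hp : p ∈ Icc (0 : ℝ) 1) (hq : q ∈ Icc (0 : ℝ) 1)
    (hzero : p = 0 → q = 0) (hone : p = 1 → q = 1) : 2 * (q - p) ^ 2 ≤ binKL q p := by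
  rcases hp.1.eq_or_lt with rfl | hp0
  · simp [hzero rfl, binKL_self]
  rcases hp.2.eq_or_lt with rfl | hp1
  · simp [hone rfl, binKL_self]
  set g : ℝ → ℝ := fun q ↦ (-Real.binEntropy q - 2 * q ^ 2) +
    (q * (4 * p - Real.log p + Real.log (1 - p)) + (-2 * p ^ 2 - Real.log (1 - p)))
  have hg : ∀ q, g q = binKL q p - 2 * (q - p) ^ 2 := fun q ↦ by
    rw [binKL_eq_neg_binEntropy_sub ⟨hp0, hp1⟩]
    ring
  have hconvex : ConvexOn ℝ (Icc 0 1) g := by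
    have hlinear : ConvexOn ℝ (Icc 0 1) fun q ↦ q * (4 * p - Real.log p + Real.log (1 - p)) :=
      ((LinearMap.id (R := ℝ) (M := ℝ)).smulRight _).convexOn (convex_Icc 0 1)
    exact convexOn_neg_binEntropy_sub_two_mul_sq.add (hlinear.add_const _)
  have hderiv : HasDerivAt g 0 p := by
    convert! ((Real.hasDerivAt_binEntropy hp0.ne' hp1.ne).neg.sub
      ((hasDerivAt_pow 2 p).const_mul 2)).add
      (((hasDerivAt_id p).mul_const (4 * p - Real.log p + Real.log (1 - p))).add_const
        (-2 * p ^ 2 - Real.log (1 - p))) using 1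
    norm_num
    ring
  have hmin : g p ≤ g q := hconvex.isMinOn_of_rightDeriv_eq_zero
    (by rw [interior_Icc]; exact ⟨hp0, hp1⟩)
    (hderiv.hasDerivWithinAt.derivWithin (uniqueDiffWithinAt_Ioi p)) hq
  rw [hg, hg, binKL_self] at hmin
  linarith

end BinaryKL

section ExponentialMoment

open Set

theorem pow_mul_exp_mul_log_div {x y : ℝ} {n : ℕ} (hxy : n ≠ 0 → 0 < x ∧ 0 < y) :
    y ^ n * Real.exp (n * Real.log (x / y)) = x ^ n := by
  rcases eq_or_ne n 0 with rfl | hn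
  · simp
  · obtain ⟨hx, hy⟩ := hxy hn
    rw [Real.exp_nat_mul, Real.exp_log (div_pos hx hy), ← mul_pow, mul_div_cancel₀ _ hy.ne']

theorem pow_mul_pow_mul_exp_binKL {m k : ℕ} (hm : 0 < m) (hk : k ≤ m) {p : ℝ}
    (hp : p ∈ Icc (0 : ℝ) 1) (hzero : p = 0 → k = 0) (hone : p = 1 → k = m) :
    p ^ k * (1 - p) ^ (m - k) * Real.exp (m * binKL (k / m) p) =
      (k / m : ℝ) ^ k * (1 - k / m : ℝ) ^ (m - k) := by
  have hexponent : m * binKL (k / m) p =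
      k * Real.log (k / m / p) + (m - k : ℕ) * Real.log ((1 - k / m) / (1 - p)) := by
    rw [binKL, Nat.cast_sub hk]
    field_simp
  have hsuccess : p ^ k * Real.exp (k * Real.log (k / m / p)) = (k / m : ℝ) ^ k :=
    pow_mul_exp_mul_log_div fun hk0 ↦
      ⟨by positivity, hp.1.lt_of_ne' fun hp0 ↦ hk0 (hzero hp0)⟩
  have hfailure : (1 - p) ^ (m - k) *
      Real.exp ((m - k : ℕ) * Real.log ((1 - k / m) / (1 - p))) = (1 - k / m : ℝ) ^ (m - k) := by
    refine pow_mul_exp_mul_log_div fun hmk ↦ ⟨?_, ?_⟩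
    · rw [sub_pos, div_lt_one (mod_cast hm)]
      exact_mod_cast (by lia : k < m)
    · exact sub_pos.2 (hp.2.lt_of_ne fun hp1 ↦ hmk (by rw [hone hp1, Nat.sub_self]))
  rw [hexponent, Real.exp_add, ← hsuccess, ← hfailure]
  ring

theorem pow_mul_pow_mul_exp_le {m k : ℕ} (hm : 0 < m) (hk : k ≤ m) {p x : ℝ}
    (hp : p ∈ Icc (0 : ℝ) 1)
    (hx : (p = 0 → (k / m : ℝ) = 0) → (p = 1 → (k / m : ℝ) = 1) → x ≤ binKL (k / m) p) :
    p ^ k * (1 - p) ^ (m - k) * Real.exp (m * x) ≤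
      (k / m : ℝ) ^ k * (1 - k / m : ℝ) ^ (m - k) := by
  have hm0 : (m : ℝ) ≠ 0 := mod_cast hm.ne'
  have hq1 : (0 : ℝ) ≤ 1 - k / m :=
    sub_nonneg.2 (div_le_one_of_le₀ (mod_cast hk) m.cast_nonneg)
  have hp0 := hp.1
  have hp1 := sub_nonneg.2 hp.2
  by_cases hzero : p = 0 → k = 0
  · by_cases hone : p = 1 → k = m
    · rw [← pow_mul_pow_mul_exp_binKL hm hk hp hzero hone]
      gcongr
      exact hx (fun h ↦ by simp [hzero h]) fun h ↦ by rw [hone h, div_self hm0]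
    · push Not at hone
      have hmk : m - k ≠ 0 := by lia
      simp only [hone.1, sub_self, zero_pow hmk, mul_zero, zero_mul]
      positivity
  · push Not at hzero
    simp only [hzero.1, zero_pow hzero.2, zero_mul]
    positivity

theorem convexOn_exp_mul {E : Type*} [AddCommMonoid E] [SMul ℝ E] {s : Set E} {φ : E → ℝ}
    (hφ : ConvexOn ℝ s φ) {c : ℝ} (hc : 0 ≤ c) :
    ConvexOn ℝ s fun q ↦ Real.exp (c * φ q) := by
  refine ⟨hφ.1, fun x hx y hy a b ha hb hab ↦ ?_⟩
  calc Real.exp (c * φ (a • x + b • y))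
      ≤ Real.exp (a • (c * φ x) + b • (c * φ y)) :=
        Real.exp_le_exp.2 ((hφ.smul hc).2 hx hy ha hb hab)
    _ ≤ a • Real.exp (c * φ x) + b • Real.exp (c * φ y) :=
        convexOn_exp.2 (mem_univ _) (mem_univ _) ha hb hab

theorem lintegral_exp_mul_mean_le_two_mul_sqrt {Z : Type*} [MeasurableSpace Z] {D : Measure Z}
    [IsProbabilityMeasure D] {f : Z → ℝ} (hf : Integrable f D)
    (hf01 : ∀ z, f z ∈ Icc (0 : ℝ) 1) {m : ℕ} (hm : 0 < m) {φ : ℝ → ℝ}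
    (hφ : ConvexOn ℝ (Icc 0 1) φ)
    (hφ_le : ∀ q ∈ Icc (0 : ℝ) 1, (∫ z, f z ∂D = 0 → q = 0) → (∫ z, f z ∂D = 1 → q = 1) →
      φ q ≤ binKL q (∫ z, f z ∂D)) :
    ∫⁻ S : Fin m → Z, ENNReal.ofReal (Real.exp (m * φ ((∑ i, f (S i)) / m)))
        ∂Measure.pi (fun _ ↦ D) ≤
      ENNReal.ofReal (2 * √m) := by
  have hmean : ∫ z, f z ∂D ∈ Icc (0 : ℝ) 1 :=
    (convex_Icc 0 1).integral_mem isClosed_Icc (.of_forall hf01) hf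
  have hbernoulli := lintegral_convexOn_mean_le (ι := Fin m) hf hf01
    (convexOn_exp_mul hφ m.cast_nonneg) fun q _ ↦ (Real.exp_pos _).le
  rw [Fintype.card_fin] at hbernoulli
  refine hbernoulli.trans (ENNReal.ofReal_le_ofReal ?_)
  refine le_trans (Finset.sum_le_sum fun k hk ↦ ?_) (shtarkovSum_le_two_mul_sqrt hm)
  have hkm : k ≤ m := Finset.mem_range_succ_iff.1 hk
  have hq : (k / m : ℝ) ∈ Icc (0 : ℝ) 1 :=
    ⟨by positivity, div_le_one_of_le₀ (mod_cast hkm) m.cast_nonneg⟩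
  exact mul_le_mul_of_nonneg_left (pow_mul_pow_mul_exp_le hm hkm hmean (hφ_le _ hq))
    (Nat.cast_nonneg _)

end ExponentialMoment

section Disintegration

variable {Ω H : Type*} [MeasurableSpace Ω] [MeasurableSpace H]

theorem compProd_le_lintegral_lintegral {μ : Measure Ω} [SFinite μ] {κ : Kernel Ω H}
    [IsSFiniteKernel κ] {π : Measure H} {ρ : Ω → H → ENNReal}
    (hκ : ∀ ω, κ ω = π.withDensity (ρ ω)) {A : Set (Ω × H)} (hA : MeasurableSet A)
    {w : Ω → H → ENNReal} (hρw : ∀ x ∈ A, ρ x.1 x.2 ≤ w x.1 x.2) :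
    (μ ⊗ₘ κ) A ≤ ∫⁻ ω, ∫⁻ h, w ω h ∂π ∂μ := by
  rw [Measure.compProd_apply hA]
  refine lintegral_mono fun ω ↦ ?_
  have hslice : MeasurableSet (Prod.mk ω ⁻¹' A) := measurable_prodMk_left hA
  rw [hκ, withDensity_apply _ hslice]
  exact (setLIntegral_mono' hslice fun h hh ↦ hρw (ω, h) hh).trans (setLIntegral_le_lintegral _ _)

theorem one_sub_le_measure_of_forall_subset_compl {μ : Measure Ω} [IsProbabilityMeasure μ]
    {A : Set Ω} {ε : ENNReal} (h : ∀ C ⊆ Aᶜ, MeasurableSet C → μ C ≤ ε) : 1 - ε ≤ μ A := by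
  have hcompl := h (toMeasurable μ A)ᶜ (Set.compl_subset_compl.2 (subset_toMeasurable μ A))
    (measurableSet_toMeasurable μ A).compl
  rw [prob_compl_eq_one_sub (measurableSet_toMeasurable μ A), measure_toMeasurable] at hcompl
  exact tsub_le_iff_tsub_le.1 hcompl

theorem one_sub_le_compProd_setOf_le_log_add_log {μ : Measure Ω} [IsProbabilityMeasure μ]
    {π : Measure H} [IsProbabilityMeasure π] {κ : Kernel Ω H} [IsMarkovKernel κ]
    {r : Ω → H → ℝ} (hr : ∀ ω h, 0 ≤ r ω h)
    (hκ : ∀ ω, κ ω = π.withDensity fun h ↦ ENNReal.ofReal (r ω h))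
    {B : Ω → H → ℝ} (hB : Measurable (Function.uncurry B)) {C : ℝ} (hC : 0 < C)
    (hmoment : ∀ h, ∫⁻ ω, ENNReal.ofReal (Real.exp (B ω h)) ∂μ ≤ ENNReal.ofReal C)
    {δ : ℝ} (hδ : 0 < δ) :
    1 - ENNReal.ofReal δ ≤
      (μ ⊗ₘ κ) {x | B x.1 x.2 ≤ Real.log (r x.1 x.2) + Real.log (C / δ)} := by
  refine one_sub_le_measure_of_forall_subset_compl fun A hA hAmeas ↦ ?_
  have hratio : ∀ x ∈ A, ENNReal.ofReal (r x.1 x.2) ≤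
      ENNReal.ofReal (δ / C) * ENNReal.ofReal (Real.exp (B x.1 x.2)) := by
    intro x hx
    rw [← ENNReal.ofReal_mul (by positivity)]
    refine ENNReal.ofReal_le_ofReal ?_
    rcases (hr x.1 x.2).eq_or_lt with hr0 | hr0
    · rw [← hr0]
      positivity
    · have hlog : Real.log (r x.1 x.2) + Real.log (C / δ) < B x.1 x.2 := not_le.1 (hA hx)
      rw [← Real.log_mul hr0.ne' (by positivity), Real.log_lt_iff_lt_exp (by positivity)] at hlog
      calc r x.1 x.2 = δ / C * (r x.1 x.2 * (C / δ)) := by field_simp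
        _ ≤ δ / C * Real.exp (B x.1 x.2) := by gcongr
  have hweight : Measurable fun x : Ω × H ↦
      ENNReal.ofReal (δ / C) * ENNReal.ofReal (Real.exp (B x.1 x.2)) :=
    (hB.exp.ennreal_ofReal).const_mul _
  calc (μ ⊗ₘ κ) A
      ≤ ∫⁻ ω, ∫⁻ h, ENNReal.ofReal (δ / C) * ENNReal.ofReal (Real.exp (B ω h)) ∂π ∂μ :=
        compProd_le_lintegral_lintegral hκ hAmeas hratio
    _ = ∫⁻ h, ∫⁻ ω, ENNReal.ofReal (δ / C) * ENNReal.ofReal (Real.exp (B ω h)) ∂μ ∂π :=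
        lintegral_lintegral_swap hweight.aemeasurable
    _ ≤ ∫⁻ _, ENNReal.ofReal δ ∂π := by
        refine lintegral_mono fun h ↦ ?_
        rw [lintegral_const_mul' _ _ ENNReal.ofReal_ne_top]
        grw [hmoment h]
        rw [← ENNReal.ofReal_mul (by positivity), div_mul_cancel₀ _ hC.ne']
    _ = ENNReal.ofReal δ := by simp

theorem withDensity_ofReal_eq_withDensity_ofReal_div (lam : Measure H) {P : H → ℝ}
    (hPpos : ∀ h, 0 < P h) (hPmeas : Measurable P) (q : H → ℝ) :
    lam.withDensity (fun h ↦ ENNReal.ofReal (q h)) =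
      (lam.withDensity fun h ↦ ENNReal.ofReal (P h)).withDensity
        fun h ↦ ENNReal.ofReal (q h / P h) := by
  ext s hs
  rw [withDensity_apply _ hs, withDensity_apply _ hs,
    setLIntegral_withDensity_eq_setLIntegral_mul_non_measurable _ hPmeas.ennreal_ofReal _ hs
      (.of_forall fun h ↦ ENNReal.ofReal_lt_top)]
  refine lintegral_congr fun h ↦ ?_
  rw [Pi.mul_apply, ← ENNReal.ofReal_mul (hPpos h).le, mul_div_cancel₀ _ (hPpos h).ne']

end Disintegration

section RiskBounds

open Set

variable {Z H : Type*} [MeasurableSpace Z] [MeasurableSpace H] {ℓ : H → Z → ℝ}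

theorem measurable_trueRisk (hℓ : Measurable (Function.uncurry ℓ)) (D : Measure Z) [SFinite D] :
    Measurable (trueRisk D ℓ) :=
  hℓ.stronglyMeasurable.integral_prod_right.measurable

theorem measurable_empRisk (hℓ : Measurable (Function.uncurry ℓ)) (m : ℕ) :
    Measurable fun x : (Fin m → Z) × H ↦ empRisk ℓ x.2 x.1 :=
  (Finset.measurable_sum _ fun i _ ↦
    hℓ.comp (measurable_snd.prodMk ((measurable_pi_apply i).comp measurable_fst))).div_const _

theorem one_sub_le_compProd_setOf_mul_le_log_add_log {m : ℕ} (hm : 0 < m) {D : Measure Z}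
    [IsProbabilityMeasure D] (hℓ : Measurable (Function.uncurry ℓ))
    (hℓ01 : ∀ h z, ℓ h z ∈ Icc (0 : ℝ) 1) {π : Measure H} [IsProbabilityMeasure π]
    {κ : Kernel (Fin m → Z) H} [IsMarkovKernel κ] {r : (Fin m → Z) → H → ℝ}
    (hr : ∀ S h, 0 ≤ r S h)
    (hκ : ∀ S, κ S = π.withDensity fun h ↦ ENNReal.ofReal (r S h))
    {φ : ℝ → ℝ → ℝ} (hφmeas : Measurable (Function.uncurry φ))
    (hφ : ∀ p, ConvexOn ℝ (Icc 0 1) fun q ↦ φ q p)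
    (hφ_le : ∀ p ∈ Icc (0 : ℝ) 1, ∀ q ∈ Icc (0 : ℝ) 1, (p = 0 → q = 0) → (p = 1 → q = 1) →
      φ q p ≤ binKL q p) {δ : ℝ} (hδ : 0 < δ) :
    1 - ENNReal.ofReal δ ≤ (Measure.pi (fun _ : Fin m ↦ D) ⊗ₘ κ)
      {x | m * φ (empRisk ℓ x.2 x.1) (trueRisk D ℓ x.2) ≤
        Real.log (r x.1 x.2) + Real.log (2 * √m / δ)} := by
  have hmeas : Measurable (Function.uncurry fun (S : Fin m → Z) (h : H) ↦
      m * φ (empRisk ℓ h S) (trueRisk D ℓ h)) :=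
    (hφmeas.comp ((measurable_empRisk hℓ m).prodMk
      ((measurable_trueRisk hℓ D).comp measurable_snd))).const_mul _
  refine one_sub_le_compProd_setOf_le_log_add_log hr hκ hmeas (by positivity) (fun h ↦ ?_) hδ
  have hint : Integrable (ℓ h) D := .of_mem_Icc 0 1 hℓ.of_uncurry_left.aemeasurable
    (.of_forall (hℓ01 h))
  have hmean : ∫ z, ℓ h z ∂D ∈ Icc (0 : ℝ) 1 :=
    (convex_Icc 0 1).integral_mem isClosed_Icc (.of_forall (hℓ01 h)) hint
  exact lintegral_exp_mul_mean_le_two_mul_sqrt hint (hℓ01 h) hm (hφ _) (hφ_le _ hmean)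

theorem measurable_binKL : Measurable (Function.uncurry binKL) := by
  unfold binKL Function.uncurry
  fun_prop

theorem convexOn_two_mul_sub_sq (p : ℝ) : ConvexOn ℝ univ fun q : ℝ ↦ 2 * (q - p) ^ 2 := by
  have hsq : ConvexOn ℝ univ fun q : ℝ ↦ (q - p) ^ 2 := by
    simpa only [preimage_univ, Function.comp_def, sub_eq_add_neg] using
      (even_two.convexOn_pow (𝕜 := ℝ)).translate_left (-p)
  exact hsq.smul zero_le_two

theorem disintegrated_kl_and_mcallester_bounds_general {m : ℕ} (hm : 0 < m) (D : Measure Z)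
    [IsProbabilityMeasure D] (hℓ : Measurable (Function.uncurry ℓ))
    (hℓ01 : ∀ h z, ℓ h z ∈ Icc (0 : ℝ) 1) {π : Measure H} [IsProbabilityMeasure π]
    {κ : Kernel (Fin m → Z) H} [IsMarkovKernel κ] {r : (Fin m → Z) → H → ℝ}
    (hr : ∀ S h, 0 ≤ r S h)
    (hκ : ∀ S, κ S = π.withDensity fun h ↦ ENNReal.ofReal (r S h)) {δ : ℝ} (hδ : 0 < δ) :
    1 - ENNReal.ofReal δ ≤ (Measure.pi (fun _ : Fin m ↦ D) ⊗ₘ κ)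
      {x | binKL (empRisk ℓ x.2 x.1) (trueRisk D ℓ x.2) ≤
        1 / m * (Real.log (r x.1 x.2) + Real.log (2 * √m / δ))} ∧
    1 - ENNReal.ofReal δ ≤ (Measure.pi (fun _ : Fin m ↦ D) ⊗ₘ κ)
      {x | |empRisk ℓ x.2 x.1 - trueRisk D ℓ x.2| ≤
        √(1 / (2 * m) * (Real.log (r x.1 x.2) + Real.log (2 * √m / δ)))} := by
  have hm0 : (0 : ℝ) < m := mod_cast hm
  constructor
  · refine (one_sub_le_compProd_setOf_mul_le_log_add_log hm hℓ hℓ01 hr hκ measurable_binKL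
      convexOn_binKL (fun p _ q _ _ _ ↦ le_rfl) hδ).trans (measure_mono fun x hx ↦ ?_)
    rwa [mem_ofPred_eq, one_div, le_inv_mul_iff₀ hm0]
  · refine (one_sub_le_compProd_setOf_mul_le_log_add_log hm hℓ hℓ01 hr hκ
      (φ := fun q p ↦ 2 * (q - p) ^ 2) (by unfold Function.uncurry; fun_prop)
      (fun p ↦ (convexOn_two_mul_sub_sq p).subset (subset_univ _) (convex_Icc 0 1))
      (fun p hp q hq ↦ two_mul_sub_sq_le_binKL hp hq) hδ).trans
      (measure_mono fun x hx ↦ Real.abs_le_sqrt ?_)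
    rw [one_div, le_inv_mul_iff₀ (by positivity), mul_assoc, mul_left_comm]
    exact hx

end RiskBounds

/-- **Disintegrated kl and McAllester-type bounds with the positive-part log
ratio.**  Each of the following holds with probability at least `1−δ` over
`S ∼ D^m` and `h ∼ Q_S`:
(i)  `kl(R_S^ℓ(h) ‖ R_D^ℓ(h)) ≤ (1/m)·[ln₊(Q_S(h)/P(h)) + ln(2√m/δ)]`;
(ii) `|R_S^ℓ(h) − R_D^ℓ(h)| ≤ √((1/(2m))·[ln₊(Q_S(h)/P(h)) + ln(2√m/δ)])`. -/
theorem disintegrated_kl_and_mcallester_bounds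
    {Z H : Type*} [MeasurableSpace Z] [MeasurableSpace H]
    (m : ℕ) (hm : 0 < m)
    (D : Measure Z) [IsProbabilityMeasure D]
    (lam : Measure H) [SigmaFinite lam]
    (ℓ : H → Z → ℝ) (hℓ : Measurable (Function.uncurry ℓ))
    (hℓ01 : ∀ h z, ℓ h z ∈ Set.Icc (0:ℝ) 1)
    (P : H → ℝ) (hPpos : ∀ h, 0 < P h) (hPmeas : Measurable P)
    (Pm : Measure H) [IsProbabilityMeasure Pm]
    (hPm : Pm = lam.withDensity fun h => ENNReal.ofReal (P h))
    (Q : (Fin m → Z) → H → ℝ) (hQpos : ∀ S h, 0 < Q S h)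
    (κ : Kernel (Fin m → Z) H) [IsMarkovKernel κ]
    (hκ : ∀ S, κ S = lam.withDensity fun h => ENNReal.ofReal (Q S h))
    (δ : ℝ) (hδ : δ ∈ Set.Ioc (0:ℝ) 1) :
    (1 - ENNReal.ofReal δ ≤
      (Measure.pi (fun _ : Fin m => D) ⊗ₘ κ)
        {p : (Fin m → Z) × H |
          binKL (empRisk ℓ p.2 p.1) (trueRisk D ℓ p.2) ≤
            (1/m) * (max (Real.log (Q p.1 p.2 / P p.2)) 0
              + Real.log (2 * Real.sqrt m / δ)) })
    ∧
    (1 - ENNReal.ofReal δ ≤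
      (Measure.pi (fun _ : Fin m => D) ⊗ₘ κ)
        {p : (Fin m → Z) × H |
          |empRisk ℓ p.2 p.1 - trueRisk D ℓ p.2| ≤
            Real.sqrt ((1/(2*m)) * (max (Real.log (Q p.1 p.2 / P p.2)) 0
              + Real.log (2 * Real.sqrt m / δ))) }) := by
  have hκr : ∀ S, κ S = Pm.withDensity fun h ↦ ENNReal.ofReal (Q S h / P h) := fun S ↦ by
    rw [hκ, hPm, ← withDensity_ofReal_eq_withDensity_ofReal_div lam hPpos hPmeas]
  obtain ⟨hkl, hmcallester⟩ := disintegrated_kl_and_mcallester_bounds_general hm D hℓ hℓ01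
    (fun S h ↦ (div_pos (hQpos S h) (hPpos h)).le) hκr hδ.1
  constructor
  · refine hkl.trans (measure_mono (Set.ofPred_subset_ofPred.2 fun x hx ↦ hx.trans ?_))
    gcongr
    exact le_max_left _ _
  · refine hmcallester.trans (measure_mono (Set.ofPred_subset_ofPred.2 fun x hx ↦ hx.trans ?_))
    gcongr
    exact le_max_left _ _
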